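/- Let 𝕀 be a Schur ideal of positive semidefinite k×k complex matrices that is non-trivial (for each i = 1,...,k there exists P ∈ 𝕀 with pᵢᵢ ≠ 0) and bounded (there exists δ > 0 such that P ≥ δ²·Diag(P) in the Loewner order for all P ∈ 𝕀, where Diag(P) is the diagonal matrix with P's diagonal entries). Then there exist a complex Hilbert space H and bounded operators E₁,...,E_k on H with EᵢEⱼ = δᵢⱼEᵢ and E₁+⋯+E_k = I, such that {w ∈ ℂ^k : ‖w₁E₁+⋯+w_kE_k‖ ≤ 1} = 𝕀^⊥. -/

import Mathlib

open scoped ComplexOrder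

/-- A bundled complex Hilbert space. -/
structure CplxHilbertSpace where
  carrier : Type
  [ng : NormedAddCommGroup carrier]
  [ip : InnerProductSpace ℂ carrier]
  [cs : CompleteSpace carrier]

attribute [instance] CplxHilbertSpace.ng CplxHilbertSpace.ip CplxHilbertSpace.cs

/-!
Write each `P ∈ 𝕀` as the Gram matrix of vectors `v₁, ..., v_k`. Then `((1 - w̄ᵢ wⱼ) pᵢⱼ)` is the
Gram matrix of `v` minus that of `(wᵢ vᵢ)`, so it is positive semidefinite exactly when
`vᵢ ↦ wᵢ vᵢ` is a well-defined contraction of the span of `v`. Boundedness of `𝕀` gives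
`δ eᵢ ∈ 𝕀^⊥`, so that `vⱼ ↦ δᵢⱼ vᵢ` is well defined with norm at most `δ⁻¹`, a bound independent of
`P`. Thus each `P` carries a representation `w ↦ (vᵢ ↦ wᵢ vᵢ)` of the algebra `ℂ^k`, the Hilbert sum
of all of these is again a bounded representation, and `Eᵢ` is the image of the idempotent `eᵢ`.
-/

section

open Matrix
open scoped ComplexConjugate ENNReal

universe u v

section Gram

variable {ι 𝕜 E F : Type*} [Fintype ι] [RCLike 𝕜]
  [SeminormedAddCommGroup E] [InnerProductSpace 𝕜 E]
  [SeminormedAddCommGroup F] [InnerProductSpace 𝕜 F]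

theorem posSemidef_gram_sub_gram_iff (v : ι → E) (u : ι → F) :
    (gram 𝕜 v - gram 𝕜 u).PosSemidef ↔
      ∀ c : ι → 𝕜, ‖∑ i, c i • u i‖ ≤ ‖∑ i, c i • v i‖ := by
  have form (c : ι → 𝕜) : star c ⬝ᵥ (gram 𝕜 v - gram 𝕜 u) *ᵥ c =
      ((‖∑ i, c i • v i‖ ^ 2 - ‖∑ i, c i • u i‖ ^ 2 : ℝ) : 𝕜) := by
    rw [sub_mulVec, dotProduct_sub, star_dotProduct_gram_mulVec, star_dotProduct_gram_mulVec,
      inner_self_eq_norm_sq_to_K, inner_self_eq_norm_sq_to_K]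
    push_cast
    rfl
  rw [posSemidef_iff_dotProduct_mulVec,
    and_iff_right ((isHermitian_gram 𝕜 v).sub (isHermitian_gram 𝕜 u))]
  refine forall_congr' fun c ↦ ?_
  rw [form, RCLike.ofReal_nonneg, sub_nonneg, sq_le_sq₀ (norm_nonneg _) (norm_nonneg _)]

open scoped MatrixOrder in
theorem exists_gram_eq_of_posSemidef {P : Matrix ι ι 𝕜} (hP : P.PosSemidef) :
    ∃ v : ι → EuclideanSpace 𝕜 ι, gram 𝕜 v = P := by
  classical
  obtain ⟨B, rfl⟩ := CStarAlgebra.nonneg_iff_eq_star_mul_self.mp hP.nonneg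
  refine ⟨fun j ↦ .toLp 2 (B.col j), ?_⟩
  ext i j
  simp [mul_apply, PiLp.inner_apply, mul_comm, star_eq_conjTranspose]

end Gram

section SchurPerp

variable {ι 𝕜 E : Type*} [RCLike 𝕜]

/-- The matrix `((1 - w̄ᵢ wⱼ) pᵢⱼ)ᵢⱼ` whose positivity defines `S^⊥`; it has the shape of the matrix
in Nevanlinna–Pick interpolation, with `P` in the role of the kernel. -/
def pickMatrix (w : ι → 𝕜) (P : Matrix ι ι 𝕜) : Matrix ι ι 𝕜 :=
  of fun i j ↦ (1 - conj (w i) * w j) * P i j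

/-- The set `S^⊥ ⊆ 𝕜^ι` associated with a set `S` of matrices. It is defined for
arbitrary `S`, not only for Schur ideals. -/
def schurPerp (S : Set (Matrix ι ι 𝕜)) : Set (ι → 𝕜) :=
  {w | ∀ P ∈ S, (pickMatrix w P).PosSemidef}

theorem pickMatrix_gram [SeminormedAddCommGroup E] [InnerProductSpace 𝕜 E]
    (w : ι → 𝕜) (v : ι → E) :
    pickMatrix w (gram 𝕜 v) = gram 𝕜 v - gram 𝕜 (fun i ↦ w i • v i) := by
  ext i j
  simp [pickMatrix, inner_smul_left, inner_smul_right, sub_mul, mul_left_comm, mul_assoc]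

theorem posSemidef_pickMatrix_gram_iff [Fintype ι] [SeminormedAddCommGroup E]
    [InnerProductSpace 𝕜 E] (w : ι → 𝕜) (v : ι → E) :
    (pickMatrix w (gram 𝕜 v)).PosSemidef ↔ ∀ c : ι → 𝕜,
      ‖Fintype.linearCombination 𝕜 v (w * c)‖ ≤ ‖Fintype.linearCombination 𝕜 v c‖ := by
  simp only [pickMatrix_gram, posSemidef_gram_sub_gram_iff, Fintype.linearCombination_apply,
    Pi.mul_apply, smul_smul, mul_comm]

theorem posSemidef_pickMatrix_single [DecidableEq ι] {P : Matrix ι ι 𝕜} (hP : P.PosSemidef)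
    {δ : ℝ} (hδ : (P - ((δ : 𝕜) ^ 2) • diagonal fun i ↦ P i i).PosSemidef) (i : ι) :
    (pickMatrix (Pi.single i (δ : 𝕜)) P).PosSemidef := by
  have diag_nonneg : 0 ≤ Function.update (fun j ↦ (δ : 𝕜) ^ 2 * P j j) i 0 :=
    le_update_iff.2 ⟨le_rfl, fun j _ ↦ mul_nonneg (mod_cast sq_nonneg δ) hP.diag_nonneg⟩
  have decomposition : pickMatrix (Pi.single i (δ : 𝕜)) P =
      (P - ((δ : 𝕜) ^ 2) • diagonal fun i ↦ P i i) +
        diagonal (Function.update (fun j ↦ (δ : 𝕜) ^ 2 * P j j) i 0) := by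
    ext a b
    rcases eq_or_ne a i with rfl | ha <;> rcases eq_or_ne a b with rfl | hab <;>
      simp_all [pickMatrix, sub_mul, sq, Pi.single_apply, eq_comm]
  rw [decomposition]
  exact hδ.add (.diagonal diag_nonneg)

end SchurPerp

section Representation

variable {R A M : Type*} [CommRing R] [Ring A] [Algebra R A] [AddCommGroup M] [Module R M]

theorem exists_algHom_end_apply_eq {Φ : A →ₗ[R] M} (hΦ : Function.Surjective Φ)
    (hker : ∀ a b, Φ b = 0 → Φ (a * b) = 0) :
    ∃ π : A →ₐ[R] Module.End R M, ∀ a b, π a (Φ b) = Φ (a * b) := by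
  have descend (a : A) : ∃ T : Module.End R M, ∀ b, T (Φ b) = Φ (a * b) := by
    let e := Φ.quotKerEquivOfSurjective hΦ
    refine ⟨(LinearMap.ker Φ).liftQ (Φ ∘ₗ LinearMap.mulLeft R a) (hker a) ∘ₗ e.symm, fun b ↦ ?_⟩
    simp only [e, LinearMap.comp_apply, LinearEquiv.coe_coe,
      LinearMap.quotKerEquivOfSurjective_symm_apply]
    rfl
  choose T hT using descend
  refine ⟨.ofLinearMap ⟨⟨T, fun a b ↦ ?_⟩, fun r a ↦ ?_⟩ ?_ fun a b ↦ ?_, hT⟩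
  all_goals
    refine LinearMap.ext (hΦ.forall.2 fun c ↦ ?_)
    simp [hT, add_mul, mul_assoc]

end Representation

section PiBound

variable {ι 𝕜 F : Type*}

theorem norm_map_pi_le [NormedField 𝕜] [Fintype ι] [DecidableEq ι] [SeminormedAddCommGroup F]
    [NormedSpace 𝕜 F] {c : 𝕜} (hc : c ≠ 0) {f : (ι → 𝕜) →ₗ[𝕜] F} {C : ℝ}
    (hf : ∀ i, ‖f (Pi.single i c)‖ ≤ C) (w : ι → 𝕜) : ‖f w‖ ≤ (∑ i, ‖w i / c‖) * C := by
  have expand : w = ∑ i, (w i / c) • Pi.single i c := by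
    simp [← Pi.single_smul, hc, Finset.univ_sum_single]
  calc
    ‖f w‖ = ‖∑ i, (w i / c) • f (Pi.single i c)‖ := by
      conv_lhs => rw [expand, map_sum]
      simp only [map_smul]
    _ ≤ ∑ i, ‖w i / c‖ * C := norm_sum_le_of_le _ fun i _ ↦ by
      rw [norm_smul]
      exact mul_le_mul_of_nonneg_left (hf i) (norm_nonneg _)
    _ = (∑ i, ‖w i / c‖) * C := (Finset.sum_mul ..).symm

end PiBound

section DirectSum

variable {σ 𝕜 A : Type*} {H : σ → Type*} [NontriviallyNormedField 𝕜]
  [∀ s, NormedAddCommGroup (H s)] [∀ s, NormedSpace 𝕜 (H s)]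
  (p : ℝ≥0∞) [Fact (1 ≤ p)]

theorem norm_mapCLM_le_iff {G : σ → Type*} [∀ s, NormedAddCommGroup (G s)]
    [∀ s, NormedSpace 𝕜 (G s)] {T : ∀ s, H s →L[𝕜] G s} {K : ℝ} (hK : 0 ≤ K) (hTK : ∀ s, ‖T s‖ ≤ K)
    {C : ℝ} (hC : 0 ≤ C) : ‖lp.mapCLM p T hK hTK‖ ≤ C ↔ ∀ s, ‖T s‖ ≤ C := by
  classical
  have hp : 0 < p := zero_lt_one.trans_le Fact.out
  refine ⟨fun h s ↦ (T s).opNorm_le_bound hC fun x ↦ ?_, fun h ↦ lp.norm_mapCLM_le p T hC h⟩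
  calc
    ‖T s x‖ = ‖lp.mapCLM p T hK hTK (lp.single p s x) s‖ := by simp
    _ ≤ ‖lp.mapCLM p T hK hTK (lp.single p s x)‖ := lp.norm_apply_le_norm hp.ne' _ s
    _ ≤ C * ‖lp.single p s x‖ := ContinuousLinearMap.le_of_opNorm_le _ h _
    _ = C * ‖x‖ := by rw [lp.norm_single hp]

variable [Ring A] [Algebra 𝕜 A]

/-- The `ℓᵖ` direct sum of representations of an algebra, bounded at each element uniformly in the
summand; for `p = 2` and Hilbert spaces `H s` it acts on their Hilbert sum. -/
noncomputable def lpDirectSum (π : ∀ s, A →ₐ[𝕜] (H s →L[𝕜] H s))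
    (hπ : ∀ a, BddAbove (Set.range fun s ↦ ‖π s a‖)) : A →ₐ[𝕜] (lp H p →L[𝕜] lp H p) :=
  .ofLinearMap
    { toFun := fun a ↦ lp.mapCLM p (fun s ↦ π s a) (Real.iSup_nonneg fun s ↦ norm_nonneg (π s a))
        (le_ciSup (hπ a))
      map_add' := fun a b ↦ by ext; simp
      map_smul' := fun c a ↦ by ext; simp }
    (by ext; simp) (fun a b ↦ by ext; simp)

theorem norm_lpDirectSum_le_iff {π : ∀ s, A →ₐ[𝕜] (H s →L[𝕜] H s)}
    (hπ : ∀ a, BddAbove (Set.range fun s ↦ ‖π s a‖)) {a : A} {C : ℝ} (hC : 0 ≤ C) :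
    ‖lpDirectSum p π hπ a‖ ≤ C ↔ ∀ s, ‖π s a‖ ≤ C :=
  norm_mapCLM_le_iff p (Real.iSup_nonneg fun s ↦ norm_nonneg (π s a)) (le_ciSup (hπ a)) hC

end DirectSum

section Main

variable {ι : Type u} {𝕜 : Type v} {E : Type*} [DecidableEq ι] [RCLike 𝕜]

theorem exists_algHom_norm_le_one_iff_posSemidef_pickMatrix_gram [Finite ι]
    [NormedAddCommGroup E] [InnerProductSpace 𝕜 E] (v : ι → E) {δ : 𝕜} (hδ : δ ≠ 0)
    (hv : ∀ i, (pickMatrix (Pi.single i δ) (gram 𝕜 v)).PosSemidef) :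
    ∃ π : (ι → 𝕜) →ₐ[𝕜] (Submodule.span 𝕜 (Set.range v) →L[𝕜] Submodule.span 𝕜 (Set.range v)),
      ∀ w, ‖π w‖ ≤ 1 ↔ (pickMatrix w (gram 𝕜 v)).PosSemidef := by
  have := Fintype.ofFinite ι
  rw [← Fintype.range_linearCombination]
  let Φ := (Fintype.linearCombination 𝕜 v).rangeRestrict
  have hΦ : Function.Surjective Φ := LinearMap.surjective_rangeRestrict _
  have norm_mul_single_le (i : ι) (c : ι → 𝕜) : ‖Φ (Pi.single i δ * c)‖ ≤ ‖Φ c‖ :=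
    (posSemidef_pickMatrix_gram_iff _ v).1 (hv i) c
  have ker_ideal (w c : ι → 𝕜) (hc : Φ c = 0) : Φ (w * c) = 0 := by
    have bound := norm_map_pi_le hδ (f := Φ ∘ₗ LinearMap.mulRight 𝕜 c)
      (norm_mul_single_le · c) w
    rwa [hc, norm_zero, mul_zero, norm_le_zero_iff] at bound
  obtain ⟨π, hπ⟩ := exists_algHom_end_apply_eq hΦ ker_ideal
  refine ⟨(Module.End.toContinuousLinearMap _).toAlgHom.comp π, fun w ↦ ?_⟩
  rw [posSemidef_pickMatrix_gram_iff, ContinuousLinearMap.opNorm_le_iff zero_le_one, hΦ.forall]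
  refine forall_congr' fun c ↦ ?_
  rw [one_mul]
  exact iff_of_eq (congrArg (‖·‖ ≤ ‖Φ c‖) (hπ w c))

theorem exists_algHom_norm_le_one_iff_mem_schurPerp [Finite ι] {S : Set (Matrix ι ι 𝕜)}
    (hS : ∀ P ∈ S, P.PosSemidef) {δ : 𝕜} (hδ : δ ≠ 0)
    (hδS : ∀ i, Pi.single i δ ∈ schurPerp S) :
    ∃ (H : Type (max u v)) (_ : NormedAddCommGroup H) (_ : InnerProductSpace 𝕜 H)
      (_ : CompleteSpace H) (π : (ι → 𝕜) →ₐ[𝕜] (H →L[𝕜] H)),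
      ∀ w, ‖π w‖ ≤ 1 ↔ w ∈ schurPerp S := by
  have := Fintype.ofFinite ι
  choose v hv using fun P : S ↦ exists_gram_eq_of_posSemidef (hS P P.2)
  choose π hπ using fun P : S ↦
    exists_algHom_norm_le_one_iff_posSemidef_pickMatrix_gram (v P) hδ fun i ↦
      (hv P).symm ▸ hδS i P P.2
  have norm_single_le (P : S) (i : ι) : ‖π P (Pi.single i δ)‖ ≤ 1 :=
    (hπ P _).2 ((hv P).symm ▸ hδS i P P.2)
  have bdd (w : ι → 𝕜) : BddAbove (Set.range fun P ↦ ‖π P w‖) :=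
    ⟨(∑ i, ‖w i / δ‖) * 1, Set.forall_mem_range.2 fun P ↦
      norm_map_pi_le (f := (π P).toLinearMap) hδ (norm_single_le P) w⟩
  have complete (P : S) : CompleteSpace (Submodule.span 𝕜 (Set.range (v P))) :=
    FiniteDimensional.complete 𝕜 _
  refine ⟨_, _, inferInstance, inferInstance, lpDirectSum 2 π bdd, fun w ↦ ?_⟩
  rw [norm_lpDirectSum_le_iff 2 bdd zero_le_one]
  simp only [hπ, hv, Subtype.forall, schurPerp, Set.mem_ofPred_eq]

theorem stmt13_general [Fintype ι] {I : Set (Matrix ι ι 𝕜)}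
    (hpsd : ∀ P ∈ I, P.PosSemidef)
    (hbounded : ∃ δ : ℝ, 0 < δ ∧ ∀ P ∈ I,
      (P - ((δ : 𝕜) ^ 2) • diagonal (fun i ↦ P i i)).PosSemidef) :
    ∃ (H : Type (max u v)) (_ : NormedAddCommGroup H) (_ : InnerProductSpace 𝕜 H)
      (_ : CompleteSpace H) (E : ι → H →L[𝕜] H),
      CompleteOrthogonalIdempotents E ∧ {w : ι → 𝕜 | ‖∑ i, w i • E i‖ ≤ 1} = schurPerp I := by
  obtain ⟨δ, hδ, hδI⟩ := hbounded
  obtain ⟨H, _, _, _, π, hπ⟩ := exists_algHom_norm_le_one_iff_mem_schurPerp hpsd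
    (RCLike.ofReal_ne_zero.2 hδ.ne') fun i P hP ↦
      posSemidef_pickMatrix_single (hpsd P hP) (hδI P hP) i
  refine ⟨H, _, _, ‹_›, fun i ↦ π (Pi.single i 1),
    (CompleteOrthogonalIdempotents.single fun _ ↦ 𝕜).map π.toRingHom, Set.ext fun w ↦ ?_⟩
  have expand : ∑ i, w i • π (Pi.single i 1) = π w := by
    simp only [← map_smul, ← map_sum, ← Pi.single_smul, smul_eq_mul, mul_one,
      Finset.univ_sum_single]
  rw [Set.mem_ofPred_eq, expand, hπ]

end Main

end

/-- Let `𝕀` be a Schur ideal of positive semidefinite `k×k` matrices that is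
non-trivial and bounded.  Then there is a complex Hilbert space `H` and bounded
operators `E₁,...,E_k` on `H` with `EᵢEⱼ = δᵢⱼEᵢ` and `E₁+⋯+E_k = I`, such that
`{w ∈ ℂ^k : ‖w₁E₁+⋯+w_kE_k‖ ≤ 1} = 𝕀^⊥`. -/
theorem stmt13 (k : ℕ) (I : Set (Matrix (Fin k) (Fin k) ℂ))
    (hpsd : ∀ P ∈ I, P.PosSemidef)
    (hadd : ∀ P ∈ I, ∀ Q ∈ I, P + Q ∈ I)
    (hschur : ∀ P ∈ I, ∀ Q : Matrix (Fin k) (Fin k) ℂ, Q.PosSemidef →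
      Matrix.hadamard P Q ∈ I)
    (hnontrivial : ∀ i : Fin k, ∃ P ∈ I, P i i ≠ 0)
    (hbounded : ∃ δ : ℝ, 0 < δ ∧ ∀ P ∈ I,
      (P - ((δ : ℂ) ^ 2) • Matrix.diagonal (fun i => P i i)).PosSemidef) :
    ∃ (𝓗 : CplxHilbertSpace) (E : Fin k → 𝓗.carrier →L[ℂ] 𝓗.carrier),
      (∀ i j, E i * E j = if i = j then E i else 0) ∧
      (∑ i, E i = 1) ∧
      {w : Fin k → ℂ | ‖∑ i, w i • E i‖ ≤ 1} =
        {w : Fin k → ℂ | ∀ P ∈ I,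
          (Matrix.of fun i j => (1 - (starRingEnd ℂ) (w i) * w j) * P i j).PosSemidef} := by
  obtain ⟨H, _, _, _, E, hE, hnorm⟩ := stmt13_general hpsd hbounded
  exact ⟨⟨H⟩, E, hE.mul_eq, hE.complete, hnorm⟩
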